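/- Let V ∈ L^∞(ℝ) with v₀ := ess inf_{x∈ℝ} V(x) > 0 and v₁ := ess sup_{x∈ℝ} V(x), fix a ∈ ℝ, and let u_a ∈ K_a be the unique minimizer of u ↦ ‖u‖_V² over K_a. Then (v₀/√v₁) e^{−√v₁ |x−a|} ≤ sgn(a−x) · u_a′(x) ≤ (v₁/√v₀) e^{−√v₀ |x−a|} holds for all x ∈ ℝ∖{a} (at points where u_a′ exists; u_a′ is defined a.e. and the bounds hold a.e. on ℝ∖{a}). -/

import Mathlib

open MeasureTheory Filter Real Topology

/-- The supremum norm `‖u‖_∞` of a (bounded continuous) function `u : ℝ → ℝ`. -/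
noncomputable def supNorm (u : ℝ → ℝ) : ℝ := ⨆ x : ℝ, |u x|

/-- `u` is (the continuous representative of) an element of `H¹(ℝ)`:
`u` is continuous, `u ∈ L²(ℝ)`, and there is a weak derivative `u' ∈ L²(ℝ)`,
i.e. `u x = u 0 + ∫_0^x u'`. -/
def IsH1 (u : ℝ → ℝ) : Prop :=
  Continuous u ∧ MemLp u 2 (volume : Measure ℝ) ∧
    ∃ u' : ℝ → ℝ, MemLp u' 2 (volume : Measure ℝ) ∧
      ∀ x : ℝ, u x = u 0 + ∫ t in (0:ℝ)..x, u' t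

/-- The Dirichlet energy `∫_ℝ |u'(x)|² dx`.  (For `u ∈ H¹(ℝ)` the classical
derivative `deriv u` exists a.e. and coincides a.e. with the weak derivative.) -/
noncomputable def energy (u : ℝ → ℝ) : ℝ := ∫ x : ℝ, (deriv u x) ^ 2

/-- `I(u;V) = ∫_ℝ (|u'(x)|² + V(x)|u(x)|²) dx` for a potential `V : ℝ → ℝ`. -/
noncomputable def IV (V : ℝ → ℝ) (u : ℝ → ℝ) : ℝ :=
  ∫ x : ℝ, ((deriv u x) ^ 2 + V x * (u x) ^ 2)

/-- Membership in `K_a = { u ∈ H¹(ℝ) ; u(a) = ‖u‖_∞ = 1 }`. -/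
def InKa (a : ℝ) (u : ℝ → ℝ) : Prop := IsH1 u ∧ u a = 1 ∧ supNorm u = 1

/-- `F(a;V) = inf { I(u;V) ; u ∈ K_a }`. -/
noncomputable def FV (V : ℝ → ℝ) (a : ℝ) : ℝ :=
  sInf {r : ℝ | ∃ u : ℝ → ℝ, InKa a u ∧ r = IV V u}

/-- `m(V) = inf { I(u;V)/‖u‖_∞² ; u ∈ H¹(ℝ), u ≢ 0 }`. -/
noncomputable def mV (V : ℝ → ℝ) : ℝ :=
  sInf {r : ℝ | ∃ u : ℝ → ℝ, IsH1 u ∧ u ≠ 0 ∧ r = IV V u / (supNorm u) ^ 2}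

lemma h1_ac {u : ℝ → ℝ} (hu : IsH1 u) (a b : ℝ) : AbsolutelyContinuousOnInterval u a b := by
  obtain ⟨hc, h2, g, hg, hug⟩ := hu
  have hli : LocallyIntegrable g volume := hg.locallyIntegrable (by norm_num)
  have hii : ∀ x y : ℝ, IntervalIntegrable g volume x y := fun x y =>
    (hli.integrableOn_isCompact isCompact_uIcc).intervalIntegrable
  obtain ⟨c, hc⟩ : ∃ c, ∀ x, u x = c + ∫ t in a..x, g t := by
    refine ⟨u a, fun x => ?_⟩
    rw [hug x, hug a, add_assoc, intervalIntegral.integral_add_adjacent_intervals (hii _ _) (hii _ _)]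
  have h : u = (fun _ => c) + (fun x => ∫ t in a..x, g t) := by
    funext x; simpa using hc x
  rw [h]
  refine AbsolutelyContinuousOnInterval.add ?_
    ((hii a b).absolutelyContinuousOnInterval_intervalIntegral (by simp))
  exact (LipschitzWith.const c).lipschitzOnWith.absolutelyContinuousOnInterval

lemma ac_diff {u : ℝ → ℝ} (hu : ∀ a b, AbsolutelyContinuousOnInterval u a b) :
    ∀ᵐ x, DifferentiableAt ℝ u x := by
  have : ∀ n : ℕ, ∀ᵐ x, x ∈ Set.uIcc (-(n:ℝ)) n → DifferentiableAt ℝ u x :=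
    fun n => (hu _ _).ae_differentiableAt
  filter_upwards [ae_all_iff.2 this] with x hx
  obtain ⟨n, hn⟩ := exists_nat_ge |x|
  apply hx n
  rw [Set.uIcc_of_le (by linarith [abs_nonneg x])]
  exact abs_le.1 hn

lemma h1_diff {u : ℝ → ℝ} (hu : IsH1 u) : ∀ᵐ x, DifferentiableAt ℝ u x :=
  ac_diff (h1_ac hu)

lemma h1_deriv {u : ℝ → ℝ} (hu : IsH1 u) : MemLp (deriv u) 2 volume := by
  obtain ⟨hc, h2, g, hg, hug⟩ := hu
  have hli : LocallyIntegrable g volume := hg.locallyIntegrable (by norm_num)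
  refine (memLp_congr_ae ?_).1 hg
  filter_upwards [LocallyIntegrable.ae_hasDerivAt_integral hli] with x hx
  have h : u = (fun x => u 0 + ∫ t in (0:ℝ)..x, g t) := funext hug
  rw [h]
  exact ((hx 0).const_add (u 0)).deriv.symm

lemma h1_mk {u : ℝ → ℝ} (hc : Continuous u) (h2 : MemLp u 2 volume)
    (hac : ∀ a b, AbsolutelyContinuousOnInterval u a b)
    (hd : MemLp (deriv u) 2 volume) : IsH1 u := by
  refine ⟨hc, h2, deriv u, hd, fun x => ?_⟩
  rw [(hac 0 x).integral_deriv_eq_sub]; ring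

lemma h1_lin {u w : ℝ → ℝ} (hu : IsH1 u) (hw : IsH1 w) (t : ℝ) :
    IsH1 (fun x => u x + t * w x) := by
  refine h1_mk (hu.1.add (hw.1.const_smul t)) (hu.2.1.add (hw.2.1.const_mul t))
    (fun a b => (h1_ac hu a b).add ((h1_ac hw a b).const_mul t)) ?_
  refine (memLp_congr_ae ?_).1 ((h1_deriv hu).add ((h1_deriv hw).const_mul t))
  filter_upwards [h1_diff hu, h1_diff hw] with x h1 h2
  exact (h1.hasDerivAt.add (h2.hasDerivAt.const_mul t)).deriv.symm

lemma deriv_sq_le_of_lip {u v : ℝ → ℝ} (h : ∀ x y, |v x - v y| ≤ |u x - u y|) {x : ℝ}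
    (hx : DifferentiableAt ℝ u x) : |deriv v x| ≤ |deriv u x| := by
  by_cases hv : DifferentiableAt ℝ v x
  · have h1 := (hasDerivAt_iff_tendsto_slope.1 hx.hasDerivAt).abs
    have h2 := (hasDerivAt_iff_tendsto_slope.1 hv.hasDerivAt).abs
    refine le_of_tendsto_of_tendsto' h2 h1 (fun y => ?_)
    simp only [slope_def_field, abs_div]
    exact div_le_div_of_nonneg_right (h _ _) (abs_nonneg _)
  · rw [deriv_zero_of_not_differentiableAt hv]; simp

lemma h1_lip {u v : ℝ → ℝ} (hu : IsH1 u) (h : ∀ x y, |v x - v y| ≤ |u x - u y|)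
    (h0 : ∀ x, |v x| ≤ |u x|) : IsH1 v := by
  have hac : ∀ a b, AbsolutelyContinuousOnInterval v a b := by
    intro a b
    have := h1_ac hu a b
    refine squeeze_zero (fun E => Finset.sum_nonneg (fun i _ => dist_nonneg)) (fun E => ?_) this
    exact Finset.sum_le_sum (fun i _ => by simpa [Real.dist_eq] using h _ _)
  have hc : Continuous v := by
    rw [continuous_iff_continuousAt]
    intro x
    have := tendsto_iff_dist_tendsto_zero.1 (hu.1.tendsto x)
    exact tendsto_iff_dist_tendsto_zero.2
      (squeeze_zero (fun _ => dist_nonneg) (fun y => by simpa [Real.dist_eq] using h _ _) this)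
  refine h1_mk hc (hu.2.1.mono hc.aestronglyMeasurable (ae_of_all _ (by simpa using h0))) hac ?_
  refine (h1_deriv hu).mono (measurable_deriv v).aestronglyMeasurable ?_
  filter_upwards [h1_diff hu] with x hx
  simpa using deriv_sq_le_of_lip h hx

lemma int_V {V f : ℝ → ℝ} {v0 v1 : ℝ} (hVm : AEStronglyMeasurable V volume)
    (hv0 : 0 < v0) (hV0 : ∀ᵐ x, v0 ≤ V x) (hV1 : ∀ᵐ x, V x ≤ v1) (hf : Integrable f) :
    Integrable (fun x => V x * f x) := by
  refine hf.bdd_mul (c := v1) hVm ?_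
  filter_upwards [hV0, hV1] with x h0 h1
  rw [Real.norm_eq_abs, abs_of_nonneg (by linarith)]; exact h1

lemma int_IV {V u : ℝ → ℝ} {v0 v1 : ℝ} (hVm : AEStronglyMeasurable V volume)
    (hv0 : 0 < v0) (hV0 : ∀ᵐ x, v0 ≤ V x) (hV1 : ∀ᵐ x, V x ≤ v1) (hu : IsH1 u) :
    Integrable (fun x => (deriv u x) ^ 2 + V x * (u x) ^ 2) :=
  (h1_deriv hu).integrable_sq.add (int_V hVm hv0 hV0 hV1 hu.2.1.integrable_sq)

lemma supNorm_eq_one {a : ℝ} {u : ℝ → ℝ} (h1 : u a = 1) (h : ∀ x, |u x| ≤ 1) : supNorm u = 1 := by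
  refine le_antisymm (ciSup_le h) ?_
  have : |u a| ≤ supNorm u := le_ciSup (f := fun x => |u x|) ⟨1, by rintro _ ⟨x, rfl⟩; exact h x⟩ a
  simpa [h1] using this

/-- The clamp to `[0,1]`. -/
noncomputable def clampOne (y : ℝ) : ℝ := max 0 (min 1 y)

lemma clampOne_lip (y z : ℝ) : |clampOne y - clampOne z| ≤ |y - z| := by
  unfold clampOne
  calc _ ≤ |min 1 y - min 1 z| := by
        simpa using abs_max_sub_max_le_max 0 (min 1 y) 0 (min 1 z)
    _ ≤ _ := by simpa using abs_min_sub_min_le_max 1 y 1 z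

lemma clampOne_abs (y : ℝ) : |clampOne y| ≤ |y| := by
  simpa [clampOne] using clampOne_lip y 0

lemma clampOne_mem (y : ℝ) : 0 ≤ clampOne y ∧ clampOne y ≤ 1 := by
  unfold clampOne; exact ⟨le_max_left _ _, max_le (by norm_num) (min_le_left _ _)⟩

lemma clamp_Ka {a : ℝ} {u : ℝ → ℝ} (hu : IsH1 u) (h1 : u a = 1) :
    InKa a (fun x => clampOne (u x)) := by
  have ha : clampOne (u a) = 1 := by simp [clampOne, h1]
  refine ⟨h1_lip hu (fun _ _ => clampOne_lip _ _) (fun _ => clampOne_abs _), ha,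
    supNorm_eq_one ha fun x => ?_⟩
  have := clampOne_mem (u x)
  rw [abs_of_nonneg this.1]; exact this.2

lemma IV_clamp_pt {V u : ℝ → ℝ} {v0 : ℝ}
    (hv0 : 0 < v0) (hV0 : ∀ᵐ x, v0 ≤ V x) (hu : IsH1 u) :
    ∀ᵐ x, (deriv (fun x => clampOne (u x)) x) ^ 2 + V x * (clampOne (u x)) ^ 2 ≤
      (deriv u x) ^ 2 + V x * (u x) ^ 2 := by
  filter_upwards [hV0, h1_diff hu] with x h0 hd
  have := sq_le_sq.2 (deriv_sq_le_of_lip (v := fun x => clampOne (u x))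
    (fun y z => clampOne_lip (u y) (u z)) hd)
  have h2 := sq_le_sq.2 (clampOne_abs (u x))
  have : 0 ≤ V x := by linarith
  gcongr

section
variable {V : ℝ → ℝ} {v0 v1 : ℝ} {a : ℝ} {u : ℝ → ℝ}

lemma min_all (hVm : AEStronglyMeasurable V volume)
    (hv0 : 0 < v0) (hV0 : ∀ᵐ x, v0 ≤ V x) (hV1 : ∀ᵐ x, V x ≤ v1)
    (hmin : ∀ w : ℝ → ℝ, InKa a w → IV V u ≤ IV V w)
    {w : ℝ → ℝ} (hw : IsH1 w) (h1 : w a = 1) : IV V u ≤ IV V w := by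
  have hK := clamp_Ka hw h1
  refine (hmin _ hK).trans ?_
  exact integral_mono_ae (int_IV hVm hv0 hV0 hV1 hK.1) (int_IV hVm hv0 hV0 hV1 hw)
    (IV_clamp_pt hv0 hV0 hw)

lemma min_nonneg (hVm : AEStronglyMeasurable V volume)
    (hv0 : 0 < v0) (hV0 : ∀ᵐ x, v0 ≤ V x) (hV1 : ∀ᵐ x, V x ≤ v1) (hua : InKa a u)
    (hmin : ∀ w : ℝ → ℝ, InKa a w → IV V u ≤ IV V w) (x : ℝ) : 0 ≤ u x ∧ u x ≤ 1 := by
  have hu := hua.1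
  have hK := clamp_Ka hu hua.2.1
  have h1 := int_IV hVm hv0 hV0 hV1 hK.1
  have h2 := int_IV hVm hv0 hV0 hV1 hu
  have hpt := IV_clamp_pt hv0 hV0 hu
  have hle := hmin _ hK
  have hz : ∫ x, (((deriv u x) ^ 2 + V x * (u x) ^ 2) -
     ((deriv (fun x => clampOne (u x)) x) ^ 2 + V x * (clampOne (u x)) ^ 2)) = 0 := by
    rw [integral_sub h2 h1]
    have := integral_mono_ae h1 h2 hpt
    unfold IV at hle
    linarith
  replace hz := (integral_eq_zero_iff_of_nonneg_ae
    (hpt.mono fun x hx => by simpa using hx) (h2.sub h1)).1 hz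
  have hae : (fun x => clampOne (u x)) =ᵐ[volume] u := by
    filter_upwards [hz, hV0, h1_diff hu] with x hx h0 hd
    have h3 := sq_le_sq.2 (deriv_sq_le_of_lip (v := fun x => clampOne (u x))
      (fun y z => clampOne_lip (u y) (u z)) hd)
    have h4 := sq_le_sq.2 (clampOne_abs (u x))
    have h5 : (clampOne (u x)) ^ 2 = (u x) ^ 2 := by
      simp only [Pi.sub_apply, Pi.zero_apply] at hx
      by_contra hne
      have h6 : 0 < u x ^ 2 - clampOne (u x) ^ 2 := sub_pos.2 (lt_of_le_of_ne h4 hne)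
      have h7 := mul_pos (lt_of_lt_of_le hv0 h0) h6
      linarith
    rcases sq_eq_sq_iff_eq_or_eq_neg.1 h5 with h | h
    · exact h
    · have := clampOne_mem (u x)
      have h6 : u x ≤ 0 := by linarith
      have : clampOne (u x) = 0 := by simp [clampOne, h6]
      linarith
  have heq := (Continuous.ae_eq_iff_eq volume hK.1.1 hu.1).1 hae
  have := clampOne_mem (u x)
  rw [show clampOne (u x) = u x from congrFun heq x] at this
  exact this

lemma EL (hVm : AEStronglyMeasurable V volume)
    (hv0 : 0 < v0) (hV0 : ∀ᵐ x, v0 ≤ V x) (hV1 : ∀ᵐ x, V x ≤ v1) (hua : InKa a u)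
    (hmin : ∀ w : ℝ → ℝ, InKa a w → IV V u ≤ IV V w)
    {φ : ℝ → ℝ} (hφ : IsH1 φ) (h0 : φ a = 0) :
    ∫ x, (deriv u x * deriv φ x + V x * (u x * φ x)) = 0 := by
  have hu := hua.1
  have iB : Integrable (fun x => deriv u x * deriv φ x + V x * (u x * φ x)) :=
    ((h1_deriv hu).integrable_mul (h1_deriv hφ)).add
      (int_V hVm hv0 hV0 hV1 (hu.2.1.integrable_mul hφ.2.1))
  set B := ∫ x, (deriv u x * deriv φ x + V x * (u x * φ x)) with hB
  have key : ∀ t : ℝ, 0 ≤ IV V φ * (t * t) + (2 * B) * t + 0 := by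
    intro t
    have h1 := min_all hVm hv0 hV0 hV1 hmin (h1_lin hu hφ t) (by simp [h0, hua.2.1])
    have h2 : IV V (fun x => u x + t * φ x) = IV V u + ((2 * t) * B + t ^ 2 * IV V φ) := by
      unfold IV
      rw [hB, ← integral_const_mul, ← integral_const_mul, ← integral_add (iB.const_mul _)
        ((int_IV hVm hv0 hV0 hV1 hφ).const_mul _)]
      refine Eq.trans ?_ (integral_add (int_IV hVm hv0 hV0 hV1 hu)
        ((iB.const_mul (2 * t)).add ((int_IV hVm hv0 hV0 hV1 hφ).const_mul (t ^ 2))))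
      apply integral_congr_ae
      filter_upwards [h1_diff hu, h1_diff hφ] with x h1 h2
      have h3 : deriv (fun x => u x + t * φ x) x = deriv u x + t * deriv φ x :=
        (h1.hasDerivAt.add (h2.hasDerivAt.const_mul t)).deriv
      simp only [h3]
      ring
    linarith
  have := discrim_le_zero key
  unfold discrim at this
  nlinarith [sq_nonneg B]
end
/-- Ramp function. -/
noncomputable def rampF (x y t : ℝ) : ℝ := max 0 (min (y - x) (t - x))

/-- Test function. -/
noncomputable def testF (k x y t : ℝ) : ℝ := Real.exp (-k * t) * rampF x y t

lemma rampF_lip (x y : ℝ) : LipschitzWith 1 (rampF x y) := by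
  refine LipschitzWith.of_dist_le_mul fun s t => ?_
  simp only [Real.dist_eq, NNReal.coe_one, one_mul]
  unfold rampF
  calc _ ≤ |min (y - x) (s - x) - min (y - x) (t - x)| := by
        simpa using abs_max_sub_max_le_max 0 (min (y - x) (s - x)) 0 (min (y - x) (t - x))
    _ ≤ _ := by simpa using abs_min_sub_min_le_max (y - x) (s - x) (y - x) (t - x)

lemma rampF_deriv {x y t : ℝ} (hxy : x < y) (hx : t ≠ x) (hy : t ≠ y) :
    HasDerivAt (rampF x y) ((Set.Ioo x y).indicator (fun _ => 1) t) t := by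
  rcases lt_or_gt_of_ne hx with h | h
  · rw [Set.indicator_of_notMem (by simp; intro; linarith)]
    refine (hasDerivAt_const t (0:ℝ)).congr_of_eventuallyEq ?_
    filter_upwards [Iio_mem_nhds h] with s hs
    have : s < x := hs
    simp only [rampF]
    exact max_eq_left ((min_le_right _ _).trans (by linarith))
  rcases lt_or_gt_of_ne hy with h' | h'
  · rw [Set.indicator_of_mem (by exact ⟨h, h'⟩)]
    refine ((hasDerivAt_id t).sub_const x).congr_of_eventuallyEq ?_
    filter_upwards [Ioo_mem_nhds h h'] with s hs
    simp only [rampF, id]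
    rw [min_eq_right (by linarith [hs.2]), max_eq_right (by linarith [hs.1])]
  · rw [Set.indicator_of_notMem (by simp; intro; linarith)]
    refine (hasDerivAt_const t (y - x)).congr_of_eventuallyEq ?_
    filter_upwards [Ioi_mem_nhds h'] with s hs
    have : y < s := hs
    simp only [rampF]
    rw [min_eq_left (by linarith), max_eq_right (by linarith)]

lemma rampF_zero {x y t : ℝ} (h : t ≤ x) : rampF x y t = 0 :=
  max_eq_left ((min_le_right _ _).trans (by linarith))

lemma rampF_nonneg {x y t : ℝ} : 0 ≤ rampF x y t := le_max_left _ _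

lemma rampF_le {x y t : ℝ} (hxy : x < y) : rampF x y t ≤ y - x :=
  max_le (by linarith) (min_le_left _ _)

lemma testF_ae_deriv {k x y : ℝ} (hxy : x < y) :
    ∀ᵐ t, deriv (testF k x y) t =
      -k * testF k x y t + (Set.Ioo x y).indicator (fun t => Real.exp (-k * t)) t := by
  have h1 : ∀ᵐ t : ℝ, t ≠ x := by simp [ae_iff]
  have h2 : ∀ᵐ t : ℝ, t ≠ y := by simp [ae_iff]
  filter_upwards [h1, h2] with t hx hy
  have he : HasDerivAt (fun t : ℝ => Real.exp (-k * t)) (Real.exp (-k * t) * (-k)) t := by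
    simpa using ((hasDerivAt_id t).const_mul (-k)).exp
  have := (he.mul (rampF_deriv hxy hx hy)).deriv
  have h3 : deriv (testF k x y) t = _ := this
  rw [h3]
  unfold testF
  by_cases h : t ∈ Set.Ioo x y
  · simp [h]; ring
  · simp [h]; ring

lemma memLp_exp {k : ℝ} (hk : 0 < k) (x : ℝ) :
    MemLp ((Set.Ioi x).indicator (fun t => Real.exp (-k * t))) 2 volume := by
  rw [memLp_indicator_iff_restrict measurableSet_Ioi]
  refine (memLp_two_iff_integrable_sq (by fun_prop)).2 ?_
  have := exp_neg_integrableOn_Ioi x (b := 2 * k) (by positivity)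
  refine this.congr (ae_of_all _ fun t => ?_)
  simp only [← Real.exp_nat_mul]
  congr 1; push_cast; ring

lemma testF_cont (k x y : ℝ) : Continuous (testF k x y) := by
  unfold testF
  have := (rampF_lip x y).continuous
  fun_prop

lemma testF_nonneg (k x y t : ℝ) : 0 ≤ testF k x y t :=
  mul_nonneg (Real.exp_pos _).le rampF_nonneg

lemma testF_le {k x y : ℝ} (hxy : x < y) (t : ℝ) :
    testF k x y t ≤ (y - x) * (Set.Ioi x).indicator (fun t => Real.exp (-k * t)) t := by
  by_cases h : t ∈ Set.Ioi x
  · simp only [h, Set.indicator_of_mem, testF]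
    rw [mul_comm]
    exact mul_le_mul_of_nonneg_right (rampF_le hxy) (Real.exp_pos _).le
  · simp only [h, not_false_eq_true, Set.indicator_of_notMem, testF]
    rw [rampF_zero (by simpa using h)]; simp

lemma testF_h1 {k x y : ℝ} (hk : 0 < k) (hxy : x < y) : IsH1 (testF k x y) := by
  refine h1_mk (testF_cont k x y) ?_ ?_ ?_
  · refine ((memLp_exp hk x).const_mul (y - x)).mono (testF_cont k x y).aestronglyMeasurable
      (ae_of_all _ fun t => ?_)
    rw [Real.norm_eq_abs, Real.norm_eq_abs, abs_of_nonneg (testF_nonneg _ _ _ _)]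
    exact (testF_le hxy t).trans (le_abs_self _)
  · intro a b
    refine AbsolutelyContinuousOnInterval.fun_mul (f := fun t => Real.exp (-k * t)) ?_
      (rampF_lip x y).lipschitzOnWith.absolutelyContinuousOnInterval
    exact ContDiffOn.absolutelyContinuousOnInterval (by fun_prop)
  · refine ((memLp_exp hk x).const_mul (k * (y - x) + 1)).mono
      (measurable_deriv _).aestronglyMeasurable ?_
    filter_upwards [testF_ae_deriv (k := k) hxy] with t ht
    rw [ht, Real.norm_eq_abs, Real.norm_eq_abs]
    have h1 := testF_le (k := k) hxy t
    have h0 := testF_nonneg k x y t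
    refine le_trans ?_ (le_abs_self _)
    have h2 : (Set.Ioo x y).indicator (fun t => Real.exp (-k * t)) t ≤
        (Set.Ioi x).indicator (fun t => Real.exp (-k * t)) t :=
      Set.indicator_le_indicator_of_subset Set.Ioo_subset_Ioi_self
        (fun _ => (Real.exp_pos _).le) t
    have h3 : 0 ≤ (Set.Ioo x y).indicator (fun t => Real.exp (-k * t)) t :=
      Set.indicator_nonneg (fun _ _ => (Real.exp_pos _).le) t
    have h4 := mul_le_mul_of_nonneg_left h1 hk.le
    have h5 := mul_nonneg hk.le h0
    rw [abs_le]; constructor <;> nlinarith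

lemma testF_tendsto {k x y : ℝ} (hk : 0 < k) (hxy : x < y) :
    Tendsto (testF k x y) atTop (𝓝 0) := by
  have h : Tendsto (fun t : ℝ => (y - x) * Real.exp (-(k * t))) atTop (𝓝 0) := by
    have := (Real.tendsto_exp_neg_atTop_nhds_zero.comp
      (tendsto_id.const_mul_atTop hk)).const_mul (y - x)
    simpa using this
  refine squeeze_zero (testF_nonneg k x y) (fun t => ?_) h
  unfold testF
  rw [mul_comm, neg_mul]
  exact mul_le_mul_of_nonneg_right (rampF_le hxy) (Real.exp_pos _).le

lemma parts {u : ℝ → ℝ} (hu : IsH1 u) (hb : ∀ x, 0 ≤ u x ∧ u x ≤ 1) {k x y : ℝ} (hk : 0 < k)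
    (hxy : x < y) :
    ∫ t, (deriv u t * testF k x y t + u t * deriv (testF k x y) t) = 0 := by
  have hφ := testF_h1 hk hxy
  have hi : Integrable (fun t => deriv u t * testF k x y t + u t * deriv (testF k x y) t) :=
    ((h1_deriv hu).integrable_mul hφ.2.1).add (hu.2.1.integrable_mul (h1_deriv hφ))
  have h1 := intervalIntegral_tendsto_integral hi tendsto_neg_atTop_atBot tendsto_id
  refine tendsto_nhds_unique h1 ?_
  have h2 : Tendsto (fun R => u R * testF k x y R) atTop (𝓝 0) := by
    refine squeeze_zero (fun t => mul_nonneg (hb t).1 (testF_nonneg _ _ _ _)) (fun t => ?_)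
      (testF_tendsto hk hxy)
    exact mul_le_of_le_one_left (testF_nonneg _ _ _ _) (hb t).2
  refine h2.congr' ?_
  filter_upwards [eventually_ge_atTop (-x)] with R hR
  simp only [id]
  rw [AbsolutelyContinuousOnInterval.integral_deriv_mul_eq_sub (h1_ac hu _ _) (h1_ac hφ _ _)]
  simp [testF, rampF_zero (show -R ≤ x by linarith)]

lemma ae_nonpos_of_int {f : ℝ → ℝ} {a : ℝ} (hf : LocallyIntegrable f volume)
    (h : ∀ x y, a ≤ x → x < y → ∫ t in x..y, f t ≤ 0) : ∀ᵐ z, a < z → f z ≤ 0 := by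
  have hii : ∀ x y : ℝ, IntervalIntegrable f volume x y := fun x y =>
    (hf.integrableOn_isCompact isCompact_uIcc).intervalIntegrable
  filter_upwards [LocallyIntegrable.ae_hasDerivAt_integral hf] with z hz haz
  refine le_of_tendsto (hz a).tendsto_slope_zero_right ?_
  filter_upwards [self_mem_nhdsWithin] with t ht
  have ht : 0 < t := ht
  rw [intervalIntegral.integral_interval_sub_left (hii _ _) (hii _ _), smul_eq_mul]
  exact mul_nonpos_of_nonneg_of_nonpos (by positivity) (h _ _ haz.le (by linarith))

section
variable {V : ℝ → ℝ} {v0 v1 : ℝ} {a : ℝ} {u : ℝ → ℝ}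

lemma wron (hVm : AEStronglyMeasurable V volume)
    (hv0 : 0 < v0) (hV0 : ∀ᵐ x, v0 ≤ V x) (hV1 : ∀ᵐ x, V x ≤ v1) (hua : InKa a u)
    (hmin : ∀ w : ℝ → ℝ, InKa a w → IV V u ≤ IV V w)
    {k x y : ℝ} (hk : 0 < k) (hax : a ≤ x) (hxy : x < y) :
    ∫ t in x..y, Real.exp (-k * t) * (deriv u t + k * u t) =
      - ∫ t, (V t - k ^ 2) * (u t * testF k x y t) := by
  have hu := hua.1
  have hφ := testF_h1 hk hxy
  have hb := min_nonneg hVm hv0 hV0 hV1 hua hmin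
  have e1 := EL hVm hv0 hV0 hV1 hua hmin hφ (by simp [testF, rampF_zero hax])
  have e2 := parts hu hb hk hxy
  have i1 : Integrable (fun t => deriv u t * testF k x y t + u t * deriv (testF k x y) t) :=
    ((h1_deriv hu).integrable_mul hφ.2.1).add (hu.2.1.integrable_mul (h1_deriv hφ))
  have iuφ : Integrable (fun t => u t * testF k x y t) := hu.2.1.integrable_mul hφ.2.1
  have iV := int_V hVm hv0 hV0 hV1 iuφ
  have iB : Integrable (fun t => deriv u t * deriv (testF k x y) t
      + V t * (u t * testF k x y t)) :=
    ((h1_deriv hu).integrable_mul (h1_deriv hφ)).add iV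
  have i3 : Integrable (fun t => (V t - k ^ 2) * (u t * testF k x y t)) := by
    refine (iV.sub (iuφ.const_mul (k ^ 2))).congr (ae_of_all _ fun t => ?_)
    simp only [Pi.sub_apply]; ring
  rw [intervalIntegral.integral_of_le hxy.le, integral_Ioc_eq_integral_Ioo,
    ← integral_indicator measurableSet_Ioo]
  have : ∫ t, (Set.Ioo x y).indicator
      (fun t => Real.exp (-k * t) * (deriv u t + k * u t)) t =
      ∫ t, ((deriv u t * deriv (testF k x y) t + V t * (u t * testF k x y t)) +
        k * (deriv u t * testF k x y t + u t * deriv (testF k x y) t) -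
        (V t - k ^ 2) * (u t * testF k x y t)) := by
    apply integral_congr_ae
    filter_upwards [testF_ae_deriv (k := k) hxy] with t ht
    rw [ht]
    by_cases h : t ∈ Set.Ioo x y
    · simp only [h, Set.indicator_of_mem]; ring
    · simp only [h, not_false_eq_true, Set.indicator_of_notMem]; ring
  rw [this]
  have h1 := integral_sub (iB.add (i1.const_mul k)) i3
  have h2 := integral_add iB (i1.const_mul k)
  simp only [Pi.add_apply] at h1
  rw [h1, h2, integral_const_mul, e1, e2]; ring

lemma loc_int (hu : IsH1 u) (k : ℝ) :
    LocallyIntegrable (fun t => Real.exp (-k * t) * (deriv u t + k * u t)) volume := by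
  have h1 : LocallyIntegrable (fun t => deriv u t + k * u t) volume :=
    (((h1_deriv hu).add (hu.2.1.const_mul k)).locallyIntegrable (by norm_num))
  exact h1.continuous_mul (by fun_prop)

lemma riccati_le (hVm : AEStronglyMeasurable V volume)
    (hv0 : 0 < v0) (hV0 : ∀ᵐ x, v0 ≤ V x) (hV1 : ∀ᵐ x, V x ≤ v1) (hua : InKa a u)
    (hmin : ∀ w : ℝ → ℝ, InKa a w → IV V u ≤ IV V w)
    {k : ℝ} (hk : 0 < k) (hkV : ∀ᵐ x, k ^ 2 ≤ V x) :
    ∀ᵐ z, a < z → deriv u z + k * u z ≤ 0 := by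
  have hb := min_nonneg hVm hv0 hV0 hV1 hua hmin
  have := ae_nonpos_of_int (a := a) (loc_int hua.1 k) (fun x y hx hxy => by
    rw [wron hVm hv0 hV0 hV1 hua hmin hk hx hxy, neg_nonpos]
    refine integral_nonneg_of_ae ?_
    filter_upwards [hkV] with t ht
    exact mul_nonneg (by linarith) (mul_nonneg (hb t).1 (testF_nonneg _ _ _ _)))
  filter_upwards [this] with z hz haz
  exact nonpos_of_mul_nonpos_right (hz haz) (Real.exp_pos _)

lemma riccati_ge (hVm : AEStronglyMeasurable V volume)
    (hv0 : 0 < v0) (hV0 : ∀ᵐ x, v0 ≤ V x) (hV1 : ∀ᵐ x, V x ≤ v1) (hua : InKa a u)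
    (hmin : ∀ w : ℝ → ℝ, InKa a w → IV V u ≤ IV V w)
    {k : ℝ} (hk : 0 < k) (hkV : ∀ᵐ x, V x ≤ k ^ 2) :
    ∀ᵐ z, a < z → 0 ≤ deriv u z + k * u z := by
  have hb := min_nonneg hVm hv0 hV0 hV1 hua hmin
  have := ae_nonpos_of_int (a := a) (loc_int hua.1 k).neg (fun x y hx hxy => by
    simp only [Pi.neg_apply]
    rw [intervalIntegral.integral_neg, wron hVm hv0 hV0 hV1 hua hmin hk hx hxy, neg_neg]
    refine integral_nonpos_of_ae ?_
    filter_upwards [hkV] with t ht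
    exact mul_nonpos_of_nonpos_of_nonneg (by linarith)
      (mul_nonneg (hb t).1 (testF_nonneg _ _ _ _)))
  filter_upwards [this] with z hz haz
  have := hz haz
  simp only [Pi.neg_apply, neg_nonpos] at this
  exact nonneg_of_mul_nonneg_right this (Real.exp_pos _)

lemma exp_id (hu : IsH1 u) (h1 : u a = 1) (k : ℝ) (z : ℝ) :
    ∫ t in a..z, Real.exp (k * (t - a)) * (deriv u t + k * u t) =
      u z * Real.exp (k * (z - a)) - 1 := by
  have hac : AbsolutelyContinuousOnInterval (fun t => Real.exp (k * (t - a))) a z :=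
    ContDiffOn.absolutelyContinuousOnInterval (by fun_prop)
  have := AbsolutelyContinuousOnInterval.integral_deriv_mul_eq_sub (h1_ac hu a z) hac
  simp only [sub_self, mul_zero, Real.exp_zero, h1, mul_one] at this
  rw [← this]
  congr 1; funext t
  have he : HasDerivAt (fun t : ℝ => Real.exp (k * (t - a))) (Real.exp (k * (t - a)) * k) t := by
    simpa using (((hasDerivAt_id t).sub_const a).const_mul k).exp
  rw [he.deriv]; ring

lemma exp_le (hu : IsH1 u) (h1 : u a = 1) {k : ℝ}
    (h : ∀ᵐ z, a < z → deriv u z + k * u z ≤ 0) {z : ℝ} (hz : a < z) :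
    u z ≤ Real.exp (-k * (z - a)) := by
  have h2 : u z * Real.exp (k * (z - a)) - 1 ≤ 0 := by
    rw [← exp_id hu h1 k z, intervalIntegral.integral_of_le hz.le]
    refine integral_nonpos_of_ae ?_
    filter_upwards [ae_restrict_of_ae h, ae_restrict_mem measurableSet_Ioc] with t ht hm
    exact mul_nonpos_of_nonneg_of_nonpos (Real.exp_pos _).le (ht hm.1)
  rw [neg_mul, Real.exp_neg, ← one_div, le_div_iff₀ (Real.exp_pos _)]
  linarith

lemma exp_ge (hu : IsH1 u) (h1 : u a = 1) {k : ℝ}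
    (h : ∀ᵐ z, a < z → 0 ≤ deriv u z + k * u z) {z : ℝ} (hz : a < z) :
    Real.exp (-k * (z - a)) ≤ u z := by
  have h2 : 0 ≤ u z * Real.exp (k * (z - a)) - 1 := by
    rw [← exp_id hu h1 k z, intervalIntegral.integral_of_le hz.le]
    refine integral_nonneg_of_ae ?_
    filter_upwards [ae_restrict_of_ae h, ae_restrict_mem measurableSet_Ioc] with t ht hm
    exact mul_nonneg (Real.exp_pos _).le (ht hm.1)
  rw [neg_mul, Real.exp_neg, ← one_div, div_le_iff₀ (Real.exp_pos _)]
  linarith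

lemma half (hVm : AEStronglyMeasurable V volume)
    (hv0 : 0 < v0) (hV0 : ∀ᵐ x, v0 ≤ V x) (hV1 : ∀ᵐ x, V x ≤ v1) (hua : InKa a u)
    (hmin : ∀ w : ℝ → ℝ, InKa a w → IV V u ≤ IV V w) :
    ∀ᵐ x, a < x →
      v0 / Real.sqrt v1 * Real.exp (-(Real.sqrt v1) * (x - a)) ≤ - deriv u x ∧
      - deriv u x ≤ v1 / Real.sqrt v0 * Real.exp (-(Real.sqrt v0) * (x - a)) := by
  have hv01 : v0 ≤ v1 := by
    obtain ⟨x, h0, h1⟩ := (hV0.and hV1).exists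
    linarith
  have hv1 : 0 < v1 := by linarith
  have hs0 := Real.sqrt_pos.2 hv0
  have hs1 := Real.sqrt_pos.2 hv1
  have hs : Real.sqrt v0 ≤ Real.sqrt v1 := Real.sqrt_le_sqrt hv01
  have q0 := Real.sq_sqrt hv0.le
  have q1 := Real.sq_sqrt hv1.le
  have r0 := riccati_le hVm hv0 hV0 hV1 hua hmin hs0 (by simpa [q0] using hV0)
  have r1 := riccati_ge hVm hv0 hV0 hV1 hua hmin hs1 (by simpa [q1] using hV1)
  filter_upwards [r0, r1] with x h0 h1 hx
  have b0 := exp_le hua.1 hua.2.1 r0 hx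
  have b1 := exp_ge hua.1 hua.2.1 r1 hx
  have c0 : v0 / Real.sqrt v1 ≤ Real.sqrt v0 := by
    rw [div_le_iff₀ hs1]; nlinarith
  have c1 : Real.sqrt v1 ≤ v1 / Real.sqrt v0 := by
    rw [le_div_iff₀ hs0]; nlinarith
  constructor
  · calc _ ≤ Real.sqrt v0 * Real.exp (-(Real.sqrt v1) * (x - a)) := by gcongr
      _ ≤ Real.sqrt v0 * u x := by gcongr
      _ ≤ _ := by linarith [h0 hx]
  · calc - deriv u x ≤ Real.sqrt v1 * u x := by linarith [h1 hx]
      _ ≤ Real.sqrt v1 * Real.exp (-(Real.sqrt v0) * (x - a)) := by gcongr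
      _ ≤ _ := by gcongr
end

lemma h1_neg {u : ℝ → ℝ} (hu : IsH1 u) : IsH1 (fun x => u (-x)) := by
  have hmp := Measure.measurePreserving_neg (volume : Measure ℝ)
  obtain ⟨hc, h2, g, hg, hug⟩ := hu
  refine ⟨hc.comp continuous_neg, h2.comp_measurePreserving hmp, fun t => - g (-t),
    (hg.comp_measurePreserving hmp).neg, fun x => ?_⟩
  rw [intervalIntegral.integral_neg, intervalIntegral.integral_comp_neg,
    ← intervalIntegral.integral_symm]
  simpa using hug (-x)

lemma Ka_neg {u : ℝ → ℝ} {a : ℝ} (hu : InKa a u) : InKa (-a) (fun x => u (-x)) := by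
  refine ⟨h1_neg hu.1, by simpa using hu.2.1, ?_⟩
  rw [← hu.2.2]
  exact (Equiv.neg ℝ).iSup_comp (g := fun x => |u x|)

lemma IV_neg (V u : ℝ → ℝ) : IV (fun x => V (-x)) (fun x => u (-x)) = IV V u := by
  unfold IV
  rw [← integral_neg_eq_self]
  congr 1; funext x
  rw [deriv_comp_neg]
  simp

/-- **Bounds on the derivative of the minimizer.** For `V ∈ L^∞(ℝ)` with
`v₀ := ess inf V > 0`, `v₁ := ess sup V`, and `u_a` the minimizer of `‖·‖_V²` over `K_a`:
`(v₀/√v₁) e^{-√v₁ |x-a|} ≤ sgn(a-x)·u_a'(x) ≤ (v₁/√v₀) e^{-√v₀ |x-a|}`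
for a.e. `x ∈ ℝ∖{a}` (where `u_a'` denotes the a.e.-defined derivative of `u_a`). -/
theorem minimizer_deriv_bounds (V : ℝ → ℝ) (hV : MemLp V ⊤ (volume : Measure ℝ))
    (hpos : 0 < essInf V (volume : Measure ℝ)) (a : ℝ)
    (ua : ℝ → ℝ) (hua : InKa a ua)
    (hmin : ∀ u : ℝ → ℝ, InKa a u → IV V ua ≤ IV V u) :
    ∀ᵐ x : ℝ, x ≠ a →
      (essInf V (volume : Measure ℝ) / Real.sqrt (essSup V (volume : Measure ℝ)) *
          Real.exp (-(Real.sqrt (essSup V (volume : Measure ℝ))) * |x - a|)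
        ≤ Real.sign (a - x) * deriv ua x ∧
      Real.sign (a - x) * deriv ua x ≤
        essSup V (volume : Measure ℝ) / Real.sqrt (essInf V (volume : Measure ℝ)) *
          Real.exp (-(Real.sqrt (essInf V (volume : Measure ℝ))) * |x - a|)) := by

  have hbd : ∃ C, ∀ᵐ x, |V x| ≤ C := by
    have := ae_le_eLpNormEssSup (f := V) (μ := volume)
    have htop : eLpNormEssSup V volume ≠ ⊤ := by
      simpa using hV.2.ne
    refine ⟨(eLpNormEssSup V volume).toReal, ?_⟩
    filter_upwards [this] with x hx
    have := ENNReal.toReal_mono htop hx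
    simpa using this
  obtain ⟨C, hC⟩ := hbd
  have hV0 : ∀ᵐ x, essInf V (volume : Measure ℝ) ≤ V x :=
    ae_essInf_le ⟨-C, by
      rw [eventually_map]
      filter_upwards [hC] with x hx using (abs_le.1 hx).1⟩
  have hV1 : ∀ᵐ x, V x ≤ essSup V (volume : Measure ℝ) :=
    ae_le_essSup ⟨C, by
      rw [eventually_map]
      filter_upwards [hC] with x hx using (abs_le.1 hx).2⟩
  generalize essInf V (volume : Measure ℝ) = v0 at *
  generalize essSup V (volume : Measure ℝ) = v1 at *
  have hmp := Measure.measurePreserving_neg (volume : Measure ℝ)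
  have hq := hmp.quasiMeasurePreserving
  have R := half hV.1 hpos hV0 hV1 hua hmin
  have L := half (V := fun x => V (-x)) (u := fun x => ua (-x)) (a := -a)
    (hV.1.comp_quasiMeasurePreserving hq) hpos (hq.ae hV0) (hq.ae hV1) (Ka_neg hua)
    (fun w hw => by
      have h1 := Ka_neg hw
      rw [neg_neg] at h1
      have h2 := hmin _ h1
      rw [IV_neg]
      refine h2.trans (le_of_eq ?_)
      rw [← IV_neg]; simp)
  have L' := hq.ae L
  filter_upwards [R, L'] with x hR hL hxa
  rcases lt_or_gt_of_ne hxa with h | h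
  · have := hL (by linarith)
    rw [deriv_comp_neg] at this
    rw [Real.sign_of_pos (by linarith), abs_of_neg (by linarith)]
    have e : -x - -a = -(x - a) := by ring
    simpa [e] using this
  · have := hR h
    rw [Real.sign_of_neg (by linarith), abs_of_pos (by linarith)]
    simpa using this
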